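/- There are no positive integers α and γ and integer β ≥ 2 satisfying 3^{4γ} − 2^{4α}·5^{4β−5} = 1. -/

import Mathlib

/-!
Since `4 * β - 5 ≥ 3`, the equation gives `3 ^ (4 * γ) ≡ 1` modulo `25`. As `3` has order `20`
modulo `25`, this forces `5 ∣ γ`. But `3 ^ 5 = 243 ≡ 1` modulo `11`, so then `11` divides
`3 ^ (4 * γ) - 1 = 2 ^ (4 * α) * 5 ^ (4 * β - 5)`, which is impossible.
-/

/-- `81 = 3 ^ 4` has order `5` modulo `25`. -/
lemma five_dvd_of_pow_modEq_one (γ : ℕ) (h : (81 : ℤ) ^ γ ≡ 1 [ZMOD 25]) : 5 ∣ γ := by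
  have h5 : ((81 : ℤ) ^ 5) ^ (γ / 5) ≡ 1 [ZMOD 25] := by
    simpa using (show (81 : ℤ) ^ 5 ≡ 1 [ZMOD 25] by decide).pow (γ / 5)
  rw [← Nat.div_add_mod γ 5, pow_add, pow_mul] at h
  have h' : (81 : ℤ) ^ (γ % 5) ≡ 1 [ZMOD 25] := by
    simpa using (h5.mul_right ((81 : ℤ) ^ (γ % 5))).symm.trans h
  have hlt : γ % 5 < 5 := Nat.mod_lt _ (by norm_num)
  rw [Nat.dvd_iff_mod_eq_zero]
  generalize γ % 5 = r at h' hlt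
  interval_cases r <;> first | rfl | (exfalso; revert h'; decide)

theorem stmt_2 :
    ¬ ∃ (α β γ : ℕ), 1 ≤ α ∧ 1 ≤ γ ∧ 2 ≤ β ∧
      (3 : ℤ) ^ (4 * γ) - 2 ^ (4 * α) * 5 ^ (4 * β - 5) = 1 := by
  rintro ⟨α, β, γ, -, -, hβ, h⟩
  have h25 : (25 : ℤ) ∣ 2 ^ (4 * α) * 5 ^ (4 * β - 5) :=
    Dvd.dvd.mul_left (pow_dvd_pow (5 : ℤ) (show 2 ≤ 4 * β - 5 by omega)) _
  have hγ : 5 ∣ γ := by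
    apply five_dvd_of_pow_modEq_one
    rw [show (81 : ℤ) = 3 ^ 4 by norm_num, ← pow_mul]
    refine (Int.modEq_iff_dvd.2 ?_).symm
    rwa [show (3 : ℤ) ^ (4 * γ) - 1 = 2 ^ (4 * α) * 5 ^ (4 * β - 5) by linarith]
  obtain ⟨k, rfl⟩ := hγ
  have h11 : (11 : ℤ) ∣ 2 ^ (4 * α) * 5 ^ (4 * β - 5) := by
    rw [show (2 : ℤ) ^ (4 * α) * 5 ^ (4 * β - 5) = 3 ^ (4 * (5 * k)) - 1 by linarith,
      show 4 * (5 * k) = 5 * (4 * k) by ring, pow_mul]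
    have := sub_dvd_pow_sub_pow ((3 : ℤ) ^ 5) 1 (4 * k)
    rw [one_pow] at this
    exact Dvd.dvd.trans (by norm_num) this
  have hp : Prime (11 : ℤ) := by norm_num
  rcases hp.dvd_or_dvd h11 with h' | h'
  · exact absurd (hp.dvd_of_dvd_pow h') (by norm_num)
  · exact absurd (hp.dvd_of_dvd_pow h') (by norm_num)
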